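/- Let L be a real n×n matrix with L + Lᵀ positive semidefinite, let 1 ≤ k ≤ n, and let ζ ∈ (0,1]. Let μ(S) := det(L_S) on k-element subsets of [n]. If S is a k-element subset with det(L_S) > 0 that is a (2,ζ)-approximate local maximum for μ, then for every k-element subset T of [n] one has det(L_T) ≤ (k^4/ζ)^k · det(L_S). -/

import Mathlib

open Finset Matrix

/-- `det(L_S)`: the determinant of the principal submatrix of `L` with rows and columns
indexed by `S` (equal to `1` when `S = ∅`). -/
noncomputable def pminor {n : ℕ} (L : Matrix (Fin n) (Fin n) ℝ) (S : Finset (Fin n)) : ℝ :=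
  (L.submatrix (fun i : {x // x ∈ S} => i.1) (fun j : {x // x ∈ S} => j.1)).det

/-!
Let `S` be the local maximum and put `I = S \ T`, `J = T \ S`, `d = |I| = |J|`. The principal
pivot transform of `L` at `S` is again nPSD, and its principal minor on `W` is
`det L_{S ∆ W} / det L_S`. So we may assume `S = ∅`: the principal minors on balanced `W ⊆ I ∪ J`
(those with `|W ∩ I| = |W ∩ J|`) with `|W ∩ I| ≤ 2` are at most `K = 1 / ζ`, and the one on `I ∪ J`
is to be bounded.

For nPSD `A` the roots of the characteristic polynomial of `-A` lie in the closed left half-plane,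
so it is a product of quadratics with nonnegative coefficients (and perhaps a linear factor). For
`A` of size `2d`, AM-GM applied to the constant terms of these quadratics gives
`det A ≤ (e / d) ^ d`, where `e` is the sum of the `2 × 2` principal minors.

It remains to bound the `2 × 2` minors. Those on a pair with one element in `I` and one in `J` are
at most `K`. For pairs `P ⊆ I` and `Q ⊆ J`, pivoting at `Q` turns the `2 × 2` minors on `P ∪ Q`
into balanced ones, so the same determinant bound gives `det A_P * det A_Q ≤ (3K)²`. A diagonal
rescaling that leaves the balanced minors unchanged then makes all minors on pairs inside `I` or
inside `J` at most `3K`. Hence `e ≤ d (4d - 3) K`, and the minor on `I ∪ J` is at most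
`((4d - 3) K) ^ d`.
-/

variable {ι κ : Type*}

section PrincipalMinor

variable {R : Type*} [CommRing R] [DecidableEq ι] [DecidableEq κ]

/-- The principal minor `det A_S` of a matrix with arbitrary index type and entries in a commutative
ring; `pminor` is the case of real matrices indexed by `Fin n`. -/
def principalMinor (A : Matrix ι ι R) (S : Finset ι) : R :=
  (A.submatrix ((↑) : S → ι) (↑)).det

lemma principalMinor_empty (A : Matrix ι ι R) : principalMinor A ∅ = 1 := det_isEmpty

lemma principalMinor_map (A : Matrix ι ι R) (f : κ ↪ ι) (V : Finset κ) :
    principalMinor A (V.map f) = principalMinor (A.submatrix f f) V := by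
  rw [principalMinor, ← det_submatrix_equiv_self (equivMap f V)]
  rfl

lemma principalMinor_diagonal_mul_mul_diagonal [Fintype ι] (A : Matrix ι ι R)
    (τ : ι → R) (S : Finset ι) :
    principalMinor (diagonal τ * A * diagonal τ) S = (∏ i ∈ S, τ i) ^ 2 * principalMinor A S := by
  have hsub : (diagonal τ * A * diagonal τ).submatrix ((↑) : S → ι) (↑) =
      diagonal (fun i : S => τ i) * A.submatrix (↑) (↑) * diagonal (fun i : S => τ i) := by
    ext i j
    simp
  rw [principalMinor, hsub, det_mul, det_mul, det_diagonal, principalMinor, prod_coe_sort S τ]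
  ring

end PrincipalMinor

section IsNPSD

/-- `A` is nPSD (a possibly nonsymmetric positive semidefinite matrix): its symmetric part is
positive semidefinite. -/
def IsNPSD (A : Matrix ι ι ℝ) : Prop :=
  (A + Aᵀ).PosSemidef

lemma isNPSD_iff [Fintype ι] {A : Matrix ι ι ℝ} :
    IsNPSD A ↔ ∀ x : ι → ℝ, 0 ≤ x ⬝ᵥ A *ᵥ x := by
  have hform (x : ι → ℝ) : x ⬝ᵥ (A + Aᵀ) *ᵥ x = 2 * (x ⬝ᵥ A *ᵥ x) := by
    rw [add_mulVec, dotProduct_add, mulVec_transpose, dotProduct_comm x (x ᵥ* A),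
      ← dotProduct_mulVec, two_mul]
  simp [IsNPSD, posSemidef_iff_dotProduct_mulVec, isHermitian_iff_isSymm,
    isSymm_add_transpose_self, hform]

lemma IsNPSD.submatrix {A : Matrix ι ι ℝ} (hA : IsNPSD A) (f : κ → ι) :
    IsNPSD (A.submatrix f f) :=
  PosSemidef.submatrix hA f

lemma IsNPSD.diagonal_mul_mul_diagonal [Fintype ι] [DecidableEq ι] {A : Matrix ι ι ℝ}
    (hA : IsNPSD A) (τ : ι → ℝ) : IsNPSD (diagonal τ * A * diagonal τ) := by
  have hcongr := PosSemidef.conjTranspose_mul_mul_same hA (diagonal τ)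
  simpa [IsNPSD, Matrix.mul_add, Matrix.add_mul, Matrix.mul_assoc] using hcongr

end IsNPSD

section Pivot

variable {R : Type*} [CommRing R] [DecidableEq ι]

/-- The matrix with the rows of `A` in the positions of `S` and the rows of the identity matrix
elsewhere. Its determinant is the principal minor of `A` on `S`. -/
def rowCompletion (A : Matrix ι ι R) (S : Finset ι) : Matrix ι ι R :=
  of (S.piecewise A.row (1 : Matrix ι ι R).row)

lemma rowCompletion_apply (A : Matrix ι ι R) (S : Finset ι) (i : ι) :
    rowCompletion A S i = if i ∈ S then A i else Pi.single i 1 := by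
  ext j
  by_cases hi : i ∈ S <;>
    simp [rowCompletion, Finset.piecewise, hi, Matrix.row, one_apply, Pi.single_apply, eq_comm]

variable [Fintype ι]

lemma det_rowCompletion (A : Matrix ι ι R) (S : Finset ι) :
    (rowCompletion A S).det = principalMinor A S :=
  det_piecewise_one_eq_submatrix_det A S

/-- The principal pivot transform of `A` at `S`: the matrix that maps `rowCompletion A S *ᵥ x` to
`rowCompletion A Sᶜ *ᵥ x`, i.e. exchanges the `S`-coordinates of `x` and `A *ᵥ x` in the graph of
`A`. It is meaningful only when the principal minor of `A` on `S` is a unit. -/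
noncomputable def principalPivot (A : Matrix ι ι R) (S : Finset ι) : Matrix ι ι R :=
  rowCompletion A Sᶜ * (rowCompletion A S)⁻¹

lemma principalPivot_mul_rowCompletion {A : Matrix ι ι R} {S : Finset ι}
    (hS : IsUnit (principalMinor A S)) :
    principalPivot A S * rowCompletion A S = rowCompletion A Sᶜ := by
  rw [principalPivot, nonsing_inv_mul_cancel_right]
  rwa [det_rowCompletion]

lemma rowCompletion_principalPivot_mul {A : Matrix ι ι R} {S : Finset ι}
    (hS : IsUnit (principalMinor A S)) (V : Finset ι) :
    rowCompletion (principalPivot A S) V * rowCompletion A S = rowCompletion A (symmDiff S V) := by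
  funext i
  rw [mul_apply_eq_vecMul, rowCompletion_apply, rowCompletion_apply]
  by_cases hV : i ∈ V
  · rw [if_pos hV, ← mul_apply_eq_vecMul, principalPivot_mul_rowCompletion hS, rowCompletion_apply]
    simp [mem_symmDiff, hV]
  · rw [if_neg hV, single_one_vecMul, row, rowCompletion_apply]
    simp [mem_symmDiff, hV]

lemma principalMinor_principalPivot_mul {A : Matrix ι ι R} {S : Finset ι}
    (hS : IsUnit (principalMinor A S)) (V : Finset ι) :
    principalMinor (principalPivot A S) V * principalMinor A S =
      principalMinor A (symmDiff S V) := by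
  simp only [← det_rowCompletion, ← rowCompletion_principalPivot_mul hS, det_mul]

protected lemma IsNPSD.principalPivot {A : Matrix ι ι ℝ} (hA : IsNPSD A) {S : Finset ι}
    (hS : IsUnit (principalMinor A S)) : IsNPSD (principalPivot A S) := by
  refine isNPSD_iff.mpr fun w => ?_
  have hG : IsUnit (rowCompletion A S) := by
    rwa [isUnit_iff_isUnit_det, det_rowCompletion]
  obtain ⟨x, rfl⟩ := mulVec_surjective_iff_isUnit.mpr hG w
  rw [mulVec_mulVec, principalPivot_mul_rowCompletion hS]
  refine (isNPSD_iff.mp hA x).trans_eq (sum_congr rfl fun i _ => ?_)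
  by_cases hi : i ∈ S <;> simp [mulVec, rowCompletion_apply, hi, mul_comm]

end Pivot

section Hurwitz

open Polynomial

/-- The polynomial `p` is weakly Hurwitz stable: its complex roots lie in the closed left
half-plane. The characteristic polynomial of `-A` has this property when `A` is nPSD. -/
def IsWeaklyHurwitz (p : ℝ[X]) : Prop :=
  ∀ z : ℂ, aeval z p = 0 → z.re ≤ 0

lemma IsWeaklyHurwitz.of_dvd {p q : ℝ[X]} (hp : IsWeaklyHurwitz p) (h : q ∣ p) :
    IsWeaklyHurwitz q := fun z hz => hp z (aeval_eq_zero_of_dvd_aeval_eq_zero h hz)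

lemma IsWeaklyHurwitz.exists_X_add_C_dvd {p : ℝ[X]} (hp : IsWeaklyHurwitz p)
    (hreal : ∀ z : ℂ, aeval z p = 0 → z.im = 0) (hdeg : p.natDegree ≠ 0) :
    ∃ a : ℝ, 0 ≤ a ∧ X + C a ∣ p := by
  obtain ⟨z, hz⟩ := IsAlgClosed.exists_aeval_eq_zero ℂ p (mt natDegree_eq_of_degree_eq_some hdeg)
  have hzre : z = (z.re : ℂ) := Complex.ext rfl (hreal z hz)
  have hroot : p.IsRoot z.re := by
    rw [hzre, ← Complex.coe_algebraMap, aeval_algebraMap_apply] at hz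
    simpa using hz
  exact ⟨-z.re, neg_nonneg.mpr (hp z hz),
    by simpa [← sub_eq_add_neg] using dvd_iff_isRoot.mpr hroot⟩

lemma IsWeaklyHurwitz.exists_quadratic_dvd {p : ℝ[X]} (hp : IsWeaklyHurwitz p)
    (hdeg : 2 ≤ p.natDegree) :
    ∃ b c : ℝ, 0 ≤ b ∧ 0 ≤ c ∧ X ^ 2 + C b * X + C c ∣ p := by
  by_cases hreal : ∀ z : ℂ, aeval z p = 0 → z.im = 0
  · obtain ⟨a, ha, q, rfl⟩ := hp.exists_X_add_C_dvd hreal (by omega)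
    have hq : q.natDegree ≠ 0 := by
      have hle := natDegree_mul_le (p := X + C a) (q := q)
      rw [natDegree_X_add_C] at hle
      omega
    obtain ⟨b, hb, r, rfl⟩ := (hp.of_dvd (dvd_mul_left _ _)).exists_X_add_C_dvd
      (fun z hz => hreal z (by simp [hz])) hq
    exact ⟨a + b, a * b, add_nonneg ha hb, mul_nonneg ha hb, r, by simp only [C_add, C_mul]; ring⟩
  · push Not at hreal
    obtain ⟨z, hz, him⟩ := hreal
    refine ⟨-(2 * z.re), ‖z‖ ^ 2, by linarith [hp z hz], sq_nonneg _, ?_⟩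
    simpa [sub_eq_add_neg] using quadratic_dvd_of_aeval_eq_zero_im_ne_zero p hz him

lemma natDegree_quadratic_mul {R : Type*} [CommRing R] [Nontrivial R] (b c : R) {q : R[X]}
    (hq : q.Monic) :
    ((X ^ 2 + C b * X + C c) * q).natDegree = q.natDegree + 2 := by
  have hquad : (X ^ 2 + C b * X + C c).natDegree = 2 := by compute_degree!
  have hmonic : (X ^ 2 + C b * X + C c).Monic := by monicity!
  rw [hmonic.natDegree_mul hq, hquad, add_comm]

lemma IsWeaklyHurwitz.quadratic_induction {P : ℝ[X] → Prop}
    (one : P 1) (linear : ∀ a, 0 ≤ a → P (X + C a))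
    (quadratic_mul : ∀ b c q, 0 ≤ b → 0 ≤ c → Monic q → IsWeaklyHurwitz q → P q →
      P ((X ^ 2 + C b * X + C c) * q))
    {p : ℝ[X]} (hp : IsWeaklyHurwitz p) (hmonic : p.Monic) : P p := by
  induction hn : p.natDegree using Nat.strong_induction_on generalizing p with
  | _ n ih =>
    obtain hn0 | hn1 | hn2 : n = 0 ∨ n = 1 ∨ 2 ≤ n := by omega
    · rwa [hmonic.natDegree_eq_zero.mp (hn.trans hn0)]
    · have hlinear : p = X + C (p.coeff 0) := hmonic.eq_X_add_C (hn.trans hn1)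
      rw [hlinear]
      refine linear _ (neg_nonpos.mp ?_)
      simpa using hp (-(p.coeff 0 : ℂ)) (by rw [hlinear]; simp)
    · obtain ⟨b, c, hb, hc, q, rfl⟩ := hp.exists_quadratic_dvd (hn ▸ hn2)
      have hq : q.Monic := Monic.of_mul_monic_left (by monicity!) hmonic
      have hdeg := natDegree_quadratic_mul b c hq
      have hqH := hp.of_dvd (dvd_mul_left q _)
      exact quadratic_mul b c q hb hc hq hqH (ih _ (by omega) hqH hq rfl)

lemma coeff_quadratic_mul_add_two {R : Type*} [CommRing R] (b c : R) (q : R[X]) (i : ℕ) :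
    ((X ^ 2 + C b * X + C c) * q).coeff (i + 2) =
      q.coeff i + b * q.coeff (i + 1) + c * q.coeff (i + 2) := by
  simp [add_mul, mul_assoc, coeff_X_pow_mul]

lemma IsWeaklyHurwitz.coeff_nonneg {p : ℝ[X]} (hp : IsWeaklyHurwitz p) (hmonic : p.Monic)
    (i : ℕ) : 0 ≤ p.coeff i := by
  refine quadratic_induction (P := fun p => ∀ i, 0 ≤ p.coeff i) ?_ ?_ ?_ hp hmonic i
  · intro i
    rw [coeff_one]
    split_ifs <;> norm_num
  · intro a ha i
    rcases i with _ | _ | i <;> simp [coeff_X, coeff_C, ha]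
  · intro b c q hb hc _ _ hq i
    have hbq (i) : 0 ≤ b * q.coeff i := mul_nonneg hb (hq i)
    have hcq (i) : 0 ≤ c * q.coeff i := mul_nonneg hc (hq i)
    rcases i with _ | _ | i
    · simpa [add_mul, mul_assoc, mul_coeff_zero] using hcq 0
    · simpa [add_mul, mul_assoc, coeff_X_pow_mul'] using add_nonneg (hbq 0) (hcq 1)
    · rw [coeff_quadratic_mul_add_two]
      linarith [hq i, hbq (i + 1), hcq (i + 2)]

lemma mul_pow_le_add_mul_div_pow {c y : ℝ} (hc : 0 ≤ c) (hy : 0 ≤ y) (d : ℕ) :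
    c * y ^ d ≤ ((c + d * y) / (d + 1)) ^ (d + 1) := by
  have hmean : 0 ≤ (c + d * y) / (d + 1) := by positivity
  obtain rfl | hy := hy.eq_or_lt
  · rcases d with _ | d
    · simp
    · simpa using pow_nonneg hmean _
  calc c * y ^ d
      = (1 + ((d + 1 : ℕ) : ℝ) * ((c + d * y) / (d + 1) / y - 1)) * y ^ (d + 1) := by
        push_cast
        field
    _ ≤ ((c + d * y) / (d + 1) / y) ^ (d + 1) * y ^ (d + 1) := by
        gcongr
        exact one_add_mul_sub_le_pow (by linarith [div_nonneg hmean hy.le]) (d + 1)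
    _ = ((c + d * y) / (d + 1)) ^ (d + 1) := by rw [← mul_pow, div_mul_cancel₀ _ hy.ne']

lemma IsWeaklyHurwitz.coeff_zero_le {p : ℝ[X]} (hp : IsWeaklyHurwitz p) (hmonic : p.Monic)
    {d : ℕ} (hd : p.natDegree = 2 * d + 2) : p.coeff 0 ≤ (p.coeff (2 * d) / (d + 1)) ^ (d + 1) := by
  refine quadratic_induction
    (P := fun p => ∀ d : ℕ, p.natDegree = 2 * d + 2 →
      p.coeff 0 ≤ (p.coeff (2 * d) / (d + 1)) ^ (d + 1)) ?_ ?_ ?_ hp hmonic d hd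
  · simp
  · intro a _ d hd
    rw [natDegree_X_add_C] at hd
    omega
  · intro b c q hb hc hq hqH ih d hd
    rw [natDegree_quadratic_mul b c hq, add_left_inj] at hd
    rcases d with _ | d
    · simp
    have hlead : q.coeff (2 * d + 2) = 1 := by
      rw [← hq.coeff_natDegree, hd, mul_add_one]
    have htop : c + q.coeff (2 * d) ≤ ((X ^ 2 + C b * X + C c) * q).coeff (2 * (d + 1)) := by
      rw [mul_add_one, coeff_quadratic_mul_add_two, hlead]
      linarith [mul_nonneg hb (hqH.coeff_nonneg hq (2 * d + 1))]
    have hqcoeff := hqH.coeff_nonneg hq (2 * d)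
    have hmean := mul_pow_le_add_mul_div_pow (y := q.coeff (2 * d) / (d + 1)) hc (by positivity)
      (d + 1)
    push_cast at hmean ⊢
    rw [mul_div_cancel₀ _ (by positivity)] at hmean
    calc ((X ^ 2 + C b * X + C c) * q).coeff 0 = c * q.coeff 0 := by simp [mul_coeff_zero]
      _ ≤ c * (q.coeff (2 * d) / (d + 1)) ^ (d + 1) := by
          gcongr
          exact ih d hd
      _ ≤ _ := hmean
      _ ≤ _ := by gcongr

end Hurwitz

section Charpoly

open Polynomial

variable [Fintype ι]

lemma IsNPSD.re_nonneg_of_mulVec_eq_smul {A : Matrix ι ι ℝ} (hA : IsNPSD A) {z : ℂ}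
    {v : ι → ℂ} (hv : v ≠ 0) (hz : A.map Complex.ofReal *ᵥ v = z • v) : 0 ≤ z.re := by
  set x : ι → ℝ := fun i => (v i).re
  set y : ι → ℝ := fun i => (v i).im
  have hre : A *ᵥ x = z.re • x - z.im • y := by
    ext i
    simpa [mulVec, dotProduct, x, y] using congr_arg Complex.re (congr_fun hz i)
  have him : A *ᵥ y = z.re • y + z.im • x := by
    ext i
    simpa [mulVec, dotProduct, x, y] using congr_arg Complex.im (congr_fun hz i)
  have hform : x ⬝ᵥ A *ᵥ x + y ⬝ᵥ A *ᵥ y = z.re * (x ⬝ᵥ x + y ⬝ᵥ y) := by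
    simp only [hre, him, dotProduct_sub, dotProduct_add, dotProduct_smul, smul_eq_mul,
      dotProduct_comm y x]
    ring
  have hpos : 0 < x ⬝ᵥ x + y ⬝ᵥ y := by
    obtain ⟨i, hi⟩ := Function.ne_iff.mp hv
    rw [dotProduct, dotProduct, ← sum_add_distrib]
    refine sum_pos' (fun j _ => add_nonneg (mul_self_nonneg _) (mul_self_nonneg _))
      ⟨i, mem_univ i, ?_⟩
    simpa [x, y, Complex.normSq_apply] using Complex.normSq_pos.mpr hi
  refine nonneg_of_mul_nonneg_left ?_ hpos
  rw [← hform]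
  exact add_nonneg (isNPSD_iff.mp hA x) (isNPSD_iff.mp hA y)

variable [DecidableEq ι]

lemma IsNPSD.isWeaklyHurwitz_charpoly_neg {A : Matrix ι ι ℝ} (hA : IsNPSD A) :
    IsWeaklyHurwitz (-A).charpoly := by
  intro z hz
  rw [← eval_map_algebraMap, ← charpoly_map, eval_charpoly] at hz
  obtain ⟨v, hv, hker⟩ := exists_mulVec_eq_zero_iff.mpr hz
  rw [sub_mulVec, sub_eq_zero] at hker
  rw [← neg_nonneg, ← Complex.neg_re]
  refine hA.re_nonneg_of_mulVec_eq_smul hv ?_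
  have hmap : A.map Complex.ofReal = -(-A).map (algebraMap ℝ ℂ) := by ext; simp
  rw [hmap, neg_mulVec, ← hker]
  simp

lemma coeff_charpoly_neg {R : Type*} [CommRing R] (A : Matrix ι ι R) {k : ℕ}
    (hk : k ≤ Fintype.card ι) :
    (-A).charpoly.coeff (Fintype.card ι - k) = ∑ V ∈ univ.powersetCard k, principalMinor A V := by
  rw [charpoly_coeff_eq_sum_minors _ _ hk, mul_sum]
  refine sum_congr rfl fun V hV => ?_
  rw [submatrix_neg, Pi.neg_apply, Pi.neg_apply, det_neg, Fintype.card_coe,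
    (mem_powersetCard.mp hV).2, ← mul_assoc, ← mul_pow, neg_one_mul, neg_neg, one_pow, one_mul]
  rfl

lemma coeff_zero_charpoly_neg {R : Type*} [CommRing R] (A : Matrix ι ι R) :
    (-A).charpoly.coeff 0 = A.det := by
  simp [coeff_zero_eq_eval_zero, eval_charpoly]

lemma IsNPSD.det_nonneg {A : Matrix ι ι ℝ} (hA : IsNPSD A) : 0 ≤ A.det := by
  rw [← coeff_zero_charpoly_neg]
  exact hA.isWeaklyHurwitz_charpoly_neg.coeff_nonneg (charpoly_monic _) 0

lemma IsNPSD.det_le {A : Matrix ι ι ℝ} (hA : IsNPSD A) {d : ℕ} (hd : Fintype.card ι = 2 * d) :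
    A.det ≤ ((∑ V ∈ univ.powersetCard 2, principalMinor A V) / d) ^ d := by
  rcases d with _ | d
  · have := Fintype.card_eq_zero_iff.mp hd
    simp
  have hdeg : (-A).charpoly.natDegree = 2 * d + 2 := by rw [charpoly_natDegree_eq_dim, hd]; rfl
  rw [← coeff_charpoly_neg A (by omega), ← coeff_zero_charpoly_neg, hd, Nat.cast_succ]
  exact hA.isWeaklyHurwitz_charpoly_neg.coeff_zero_le (charpoly_monic _) hdeg

end Charpoly

section PrincipalMinorBound

variable [DecidableEq ι] {A : Matrix ι ι ℝ}

lemma IsNPSD.principalMinor_nonneg (hA : IsNPSD A) (S : Finset ι) :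
    0 ≤ principalMinor A S :=
  (hA.submatrix _).det_nonneg

lemma IsNPSD.principalMinor_le (hA : IsNPSD A) {U : Finset ι} {d : ℕ} (hU : U.card = 2 * d) :
    principalMinor A U ≤ ((∑ V ∈ U.powersetCard 2, principalMinor A V) / d) ^ d := by
  have hsum : ∑ V ∈ U.powersetCard 2, principalMinor A V =
      ∑ V ∈ univ.powersetCard 2, principalMinor (A.submatrix ((↑) : U → ι) (↑)) V := by
    conv_lhs => rw [← attach_map_val (s := U), powersetCard_map, sum_map]
    exact sum_congr rfl fun V _ => principalMinor_map A (Function.Embedding.subtype _) V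
  rw [hsum]
  exact (hA.submatrix _).det_le (by simpa using hU)

end PrincipalMinorBound

section Balanced

variable [DecidableEq ι]

/-- The set `W ⊆ I ∪ J` is balanced if it meets `I` and `J` in equally many elements. For
`I = S \ T` and `J = T \ S` this says that `symmDiff S W` has as many elements as `S`. -/
def IsBalanced (I J W : Finset ι) : Prop :=
  W ⊆ I ∪ J ∧ (W ∩ I).card = (W ∩ J).card

lemma card_inter_add_card_inter {I J W : Finset ι} (hIJ : Disjoint I J) (hW : W ⊆ I ∪ J) :
    (W ∩ I).card + (W ∩ J).card = W.card := by
  rw [← card_union_of_disjoint (hIJ.mono inter_subset_right inter_subset_right),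
    ← inter_union_distrib_left, inter_eq_left.mpr hW]

lemma isBalanced_symmDiff {I J V : Finset ι} (hIJ : Disjoint I J) (hV : V ⊆ I ∪ J)
    (hcard : V.card = J.card) : IsBalanced I J (symmDiff J V) := by
  refine ⟨by grind [mem_symmDiff], ?_⟩
  have hI : symmDiff J V ∩ I = V ∩ I := by grind [mem_symmDiff, disjoint_left]
  have hJ : symmDiff J V ∩ J = J \ V := by grind [mem_symmDiff]
  have hJV := card_sdiff_add_card_inter J V
  have hVIJ := card_inter_add_card_inter hIJ hV
  rw [inter_comm J V] at hJV
  rw [hI, hJ]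
  omega

lemma IsBalanced.mono {I J P Q W : Finset ι} (hIJ : Disjoint I J) (hP : P ⊆ I) (hQ : Q ⊆ J)
    (hW : IsBalanced P Q W) : IsBalanced I J W := by
  obtain ⟨hWPQ, hcard⟩ := hW
  refine ⟨hWPQ.trans (union_subset_union hP hQ), ?_⟩
  have hI : W ∩ I = W ∩ P := by grind [disjoint_left]
  have hJ : W ∩ J = W ∩ Q := by grind [disjoint_left]
  rw [hI, hJ, hcard]

lemma isBalanced_of_card_eq_two {I J V : Finset ι} (hIJ : Disjoint I J) (hV : V ⊆ I ∪ J)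
    (hcard : V.card = 2) (hI : ¬ V ⊆ I) (hJ : ¬ V ⊆ J) : IsBalanced I J V := by
  refine ⟨hV, ?_⟩
  have hVIJ := card_inter_add_card_inter hIJ hV
  have hVI : (V ∩ I).Nonempty := nonempty_iff_ne_empty.mpr fun h =>
    hJ ((disjoint_iff_inter_eq_empty.mpr h).left_le_of_le_sup_left hV)
  have hVJ : (V ∩ J).Nonempty := nonempty_iff_ne_empty.mpr fun h =>
    hI ((disjoint_iff_inter_eq_empty.mpr h).left_le_of_le_sup_right hV)
  have := hVI.card_pos
  have := hVJ.card_pos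
  omega

lemma IsBalanced.sdiff_symmDiff {S T W : Finset ι} (hW : IsBalanced (S \ T) (T \ S) W) :
    S \ symmDiff S W = W ∩ (S \ T) := by
  have := hW.1
  grind [mem_symmDiff]

lemma IsBalanced.symmDiff_sdiff {S T W : Finset ι} (hW : IsBalanced (S \ T) (T \ S) W) :
    symmDiff S W \ S = W ∩ (T \ S) := by
  have := hW.1
  grind [mem_symmDiff]

lemma IsBalanced.card_symmDiff {S T W : Finset ι} (hW : IsBalanced (S \ T) (T \ S) W) :
    (symmDiff S W).card = S.card := by
  rw [← card_sdiff_eq_card_sdiff_iff, hW.sdiff_symmDiff, hW.symmDiff_sdiff, hW.2]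

lemma IsNPSD.principalMinor_mul_principalMinor_le [Finite ι] {A : Matrix ι ι ℝ} (hA : IsNPSD A)
    {P Q : Finset ι} (hP : P.card = 2) (hQ : Q.card = 2) (hPQ : Disjoint P Q) {K : ℝ}
    (hK : ∀ W, IsBalanced P Q W → principalMinor A W ≤ K) :
    principalMinor A P * principalMinor A Q ≤ (3 * K) ^ 2 := by
  cases nonempty_fintype ι
  by_cases hq : principalMinor A Q = 0
  · rw [hq, mul_zero]
    positivity
  have hcard : (P ∪ Q).card = 2 * 2 := by rw [card_union_of_disjoint hPQ, hP, hQ]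
  set M := principalPivot A Q
  have hM : IsNPSD M := hA.principalPivot (Ne.isUnit hq)
  have hpivot (V) : principalMinor M V * principalMinor A Q = principalMinor A (symmDiff Q V) :=
    principalMinor_principalPivot_mul (Ne.isUnit hq) V
  set s := ∑ V ∈ (P ∪ Q).powersetCard 2, principalMinor M V
  have hs0 : 0 ≤ s := sum_nonneg fun V _ => hM.principalMinor_nonneg V
  have hq0 := hA.principalMinor_nonneg Q
  have hs : s * principalMinor A Q ≤ 6 * K := by
    rw [sum_mul]
    refine (sum_le_card_nsmul _ _ K fun V hV => ?_).trans_eq ?_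
    · obtain ⟨hV, hV2⟩ := mem_powersetCard.mp hV
      exact (hpivot V).trans_le (hK _ (isBalanced_symmDiff hPQ hV (hV2.trans hQ.symm)))
    · rw [card_powersetCard, hcard, nsmul_eq_mul]
      norm_num [Nat.choose]
  have hsymm : symmDiff Q (P ∪ Q) = P := by grind [mem_symmDiff, disjoint_left]
  calc principalMinor A P * principalMinor A Q
      = principalMinor M (P ∪ Q) * principalMinor A Q ^ 2 := by
        rw [sq, ← mul_assoc, hpivot, hsymm]
    _ ≤ (s / (2 : ℕ)) ^ 2 * principalMinor A Q ^ 2 := by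
        gcongr
        exact hM.principalMinor_le hcard
    _ = (s * principalMinor A Q / 2) ^ 2 := by push_cast; ring
    _ ≤ (6 * K / 2) ^ 2 := by gcongr
    _ = (3 * K) ^ 2 := by ring

lemma exists_pos_mul_le_and_le_mul {α β : Type*} {s : Finset α} {t : Finset β} {f : α → ℝ}
    {g : β → ℝ} {C : ℝ} (hC : 0 < C) (hg : ∀ j ∈ t, 0 ≤ g j)
    (hfg : ∀ i ∈ s, ∀ j ∈ t, f i * g j ≤ C ^ 2) :
    ∃ x : ℝ, 0 < x ∧ (∀ i ∈ s, x * f i ≤ C) ∧ ∀ j ∈ t, g j ≤ x * C := by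
  by_cases hf : ∃ i ∈ s, 0 < f i
  · obtain ⟨i, hi, hfi⟩ := hf
    obtain ⟨m, hm, hmax⟩ := s.exists_max_image f ⟨i, hi⟩
    have hfm : 0 < f m := hfi.trans_le (hmax i hi)
    refine ⟨C / f m, div_pos hC hfm, fun i hi => ?_, fun j hj => ?_⟩
    · rw [div_mul_eq_mul_div, div_le_iff₀ hfm]
      exact mul_le_mul_of_nonneg_left (hmax i hi) hC.le
    · rw [div_mul_eq_mul_div, le_div_iff₀' hfm, ← sq]
      exact hfg m hm j hj
  · push Not at hf
    have hsum := sum_nonneg hg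
    refine ⟨(∑ j ∈ t, g j + 1) / C, by positivity, fun i hi => ?_, fun j hj => ?_⟩
    · exact (mul_nonpos_of_nonneg_of_nonpos (by positivity) (hf i hi)).trans hC.le
    · rw [div_mul_cancel₀ _ hC.ne']
      linarith [single_le_sum hg hj]

lemma IsNPSD.exists_rescaling [Finite ι] {A : Matrix ι ι ℝ} (hA : IsNPSD A) {I J : Finset ι}
    (hIJ : Disjoint I J) {C : ℝ} (hC : 0 < C)
    (h : ∀ P ∈ I.powersetCard 2, ∀ Q ∈ J.powersetCard 2,
      principalMinor A P * principalMinor A Q ≤ C ^ 2) :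
    ∃ B : Matrix ι ι ℝ, IsNPSD B ∧
      (∀ W, IsBalanced I J W → principalMinor B W = principalMinor A W) ∧
      (∀ P ∈ I.powersetCard 2, principalMinor B P ≤ C) ∧
      ∀ Q ∈ J.powersetCard 2, principalMinor B Q ≤ C := by
  cases nonempty_fintype ι
  obtain ⟨x, hx, hxI, hxJ⟩ :=
    exists_pos_mul_le_and_le_mul hC (fun Q _ => hA.principalMinor_nonneg Q) h
  -- A minor on a pair inside `I` is scaled by `(t ^ 2) ^ 2`, which has to be `x`.
  set t := √√x
  have ht : 0 < t := by positivity
  have ht4 : t ^ 4 = x := by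
    rw [show t ^ 4 = (t ^ 2) ^ 2 by ring, Real.sq_sqrt (Real.sqrt_nonneg x), Real.sq_sqrt hx.le]
  set τ : ι → ℝ := fun i => if i ∈ I then t else t⁻¹
  have hτ (W : Finset ι) (hW : W ⊆ I ∪ J) :
      ∏ i ∈ W, τ i = t ^ (W ∩ I).card * t⁻¹ ^ (W ∩ J).card := by
    have hWJ : W \ I = W ∩ J := by grind [disjoint_left]
    rw [prod_ite, prod_const, prod_const, filter_mem_eq_inter, filter_notMem_eq_sdiff, hWJ]
  refine ⟨diagonal τ * A * diagonal τ, hA.diagonal_mul_mul_diagonal τ, fun W hW => ?_,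
    fun P hP => ?_, fun Q hQ => ?_⟩ <;> rw [principalMinor_diagonal_mul_mul_diagonal]
  · rw [hτ W hW.1, hW.2, ← mul_pow, mul_inv_cancel₀ ht.ne', one_pow, one_pow, one_mul]
  · obtain ⟨hPI, hcard⟩ := mem_powersetCard.mp hP
    have hPJ : P ∩ J = ∅ := disjoint_iff_inter_eq_empty.mp (hIJ.mono_left hPI)
    rw [hτ P (hPI.trans subset_union_left), inter_eq_left.mpr hPI, hPJ, hcard, card_empty,
      pow_zero, mul_one, ← pow_mul, ht4]
    exact hxI P hP
  · obtain ⟨hQJ, hcard⟩ := mem_powersetCard.mp hQ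
    have hQI : Q ∩ I = ∅ := disjoint_iff_inter_eq_empty.mp (hIJ.symm.mono_left hQJ)
    rw [hτ Q (hQJ.trans subset_union_right), inter_eq_left.mpr hQJ, hQI, hcard, card_empty,
      pow_zero, one_mul, ← pow_mul, inv_pow, ht4, inv_mul_le_iff₀ hx]
    exact hxJ Q hQ

lemma sum_powersetCard_two_union_le {f : Finset ι → ℝ} {I J : Finset ι} (hIJ : Disjoint I J)
    {d : ℕ} (hI : I.card = d) (hJ : J.card = d) {K : ℝ} (hK : 0 ≤ K)
    (hbal : ∀ V, V.card = 2 → IsBalanced I J V → f V ≤ K)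
    (hfI : ∀ V ∈ I.powersetCard 2, f V ≤ 3 * K) (hfJ : ∀ V ∈ J.powersetCard 2, f V ≤ 3 * K) :
    ∑ V ∈ (I ∪ J).powersetCard 2, f V ≤ d * (4 * d - 3) * K := by
  have hcard : (I ∪ J).card = 2 * d := by rw [card_union_of_disjoint hIJ, hI, hJ, two_mul]
  calc ∑ V ∈ (I ∪ J).powersetCard 2, f V
      ≤ ∑ V ∈ (I ∪ J).powersetCard 2, (K + (if V ∈ I.powersetCard 2 then 2 * K else 0) +
          if V ∈ J.powersetCard 2 then 2 * K else 0) := by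
        refine sum_le_sum fun V hV => ?_
        obtain ⟨hV, hV2⟩ := mem_powersetCard.mp hV
        by_cases hVI : V ⊆ I
        · have := hfI V (mem_powersetCard.mpr ⟨hVI, hV2⟩)
          split_ifs <;> grind
        by_cases hVJ : V ⊆ J
        · have := hfJ V (mem_powersetCard.mpr ⟨hVJ, hV2⟩)
          split_ifs <;> grind
        have := hbal V hV2 (isBalanced_of_card_eq_two hIJ hV hV2 hVI hVJ)
        split_ifs <;> linarith
    _ = ((2 * d).choose 2 : ℕ) * K + (d.choose 2 : ℕ) * (2 * K) + (d.choose 2 : ℕ) * (2 * K) := by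
        rw [sum_add_distrib, sum_add_distrib, sum_ite_mem, sum_ite_mem,
          inter_eq_right.mpr (powersetCard_mono subset_union_left),
          inter_eq_right.mpr (powersetCard_mono subset_union_right)]
        simp only [sum_const, card_powersetCard, hcard, hI, hJ, nsmul_eq_mul]
    _ = d * (4 * d - 3) * K := by
        rw [Nat.cast_choose_two, Nat.cast_choose_two]
        push_cast
        ring

lemma IsNPSD.principalMinor_union_le [Finite ι] {A : Matrix ι ι ℝ} (hA : IsNPSD A)
    {I J : Finset ι} (hIJ : Disjoint I J) {d : ℕ} (hI : I.card = d) (hJ : J.card = d) {K : ℝ}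
    (hK : ∀ W, IsBalanced I J W → (W ∩ I).card ≤ 2 → principalMinor A W ≤ K) :
    principalMinor A (I ∪ J) ≤ ((4 * d - 3) * K) ^ d := by
  have hK0 : 0 < K := zero_lt_one.trans_le <|
    principalMinor_empty A ▸ hK ∅ ⟨empty_subset _, by simp⟩ (by simp)
  have hpairs : ∀ P ∈ I.powersetCard 2, ∀ Q ∈ J.powersetCard 2,
      principalMinor A P * principalMinor A Q ≤ (3 * K) ^ 2 := by
    intro P hP Q hQ
    obtain ⟨hPI, hP2⟩ := mem_powersetCard.mp hP
    obtain ⟨hQJ, hQ2⟩ := mem_powersetCard.mp hQ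
    refine hA.principalMinor_mul_principalMinor_le hP2 hQ2 (hIJ.mono hPI hQJ) fun W hW => ?_
    refine hK W (hW.mono hIJ hPI hQJ) ((card_le_card ?_).trans_eq hP2)
    have := hW.1
    grind [disjoint_left]
  obtain ⟨B, hB, hBA, hBI, hBJ⟩ := hA.exists_rescaling hIJ (by positivity) hpairs
  have hsum := sum_powersetCard_two_union_le hIJ hI hJ hK0.le
    (fun V hV2 hV => (hBA V hV).trans_le (hK V hV ((card_le_card inter_subset_left).trans_eq hV2)))
    hBI hBJ
  have hunion : IsBalanced I J (I ∪ J) :=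
    ⟨Subset.rfl, by rw [union_inter_cancel_left, union_inter_cancel_right, hI, hJ]⟩
  have hcard : (I ∪ J).card = 2 * d := by rw [card_union_of_disjoint hIJ, hI, hJ, two_mul]
  obtain rfl | hd := Nat.eq_zero_or_pos d
  · simpa [hBA _ hunion] using hB.principalMinor_le hcard
  calc principalMinor A (I ∪ J) = principalMinor B (I ∪ J) := (hBA _ hunion).symm
    _ ≤ ((∑ V ∈ (I ∪ J).powersetCard 2, principalMinor B V) / d) ^ d :=
        hB.principalMinor_le hcard
    _ ≤ (d * (4 * d - 3) * K / d) ^ d := by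
        gcongr
        exact div_nonneg (sum_nonneg fun V _ => hB.principalMinor_nonneg V) d.cast_nonneg
    _ = ((4 * d - 3) * K) ^ d := by field_simp

lemma IsNPSD.principalMinor_le_of_local_max [Finite ι] {L : Matrix ι ι ℝ}
    (hL : IsNPSD L) {ζ : ℝ} (hζ : 0 < ζ) {S : Finset ι} (hS : 0 < principalMinor L S)
    (hloc : ∀ T : Finset ι, T.card = S.card → (S \ T).card ≤ 2 →
      ζ * principalMinor L T ≤ principalMinor L S)
    {T : Finset ι} (hT : T.card = S.card) :
    principalMinor L T ≤
      ((4 * (S \ T).card - 3) / ζ) ^ (S \ T).card * principalMinor L S := by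
  cases nonempty_fintype ι
  have hpivot := principalMinor_principalPivot_mul hS.ne'.isUnit
  have hbal : ∀ W, IsBalanced (S \ T) (T \ S) W → (W ∩ (S \ T)).card ≤ 2 →
      principalMinor (principalPivot L S) W ≤ ζ⁻¹ := by
    intro W hW hW2
    have hopt := hloc _ hW.card_symmDiff (by rwa [hW.sdiff_symmDiff])
    rw [← hpivot, ← mul_assoc] at hopt
    rw [← one_div, le_div_iff₀' hζ]
    exact le_of_mul_le_mul_right (by rwa [one_mul]) hS
  have hsymm : symmDiff S (S \ T ∪ T \ S) = T := symmDiff_symmDiff_cancel_left S T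
  rw [← hsymm, ← hpivot, hsymm, div_eq_mul_inv]
  refine mul_le_mul_of_nonneg_right ?_ hS.le
  exact (hL.principalPivot hS.ne'.isUnit).principalMinor_union_le disjoint_sdiff_sdiff rfl
    (card_sdiff_comm hT) hbal

end Balanced

theorem nPSD_local_search_guarantee_general [DecidableEq ι] {L : Matrix ι ι ℝ}
    (hL : IsNPSD L) {ζ : ℝ} (hζ : 0 < ζ) {S : Finset ι} (hS : 0 < principalMinor L S)
    (hloc : ∀ T : Finset ι, T.card = S.card → (S \ T).card ≤ 2 →
      ζ * principalMinor L T ≤ principalMinor L S)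
    {T : Finset ι} (hT : T.card = S.card) :
    principalMinor L T ≤
      ((4 * (S \ T).card - 3) / ζ) ^ (S \ T).card * principalMinor L S := by
  obtain ⟨U, hSU, hTU⟩ : ∃ U, S ⊆ U ∧ T ⊆ U := ⟨S ∪ T, subset_union_left, subset_union_right⟩
  set f : U ↪ ι := Function.Embedding.subtype _
  obtain ⟨S, rfl⟩ : ∃ S' : Finset U, S'.map f = S := ⟨_, subtype_map_of_mem hSU⟩
  obtain ⟨T, rfl⟩ : ∃ T' : Finset U, T'.map f = T := ⟨_, subtype_map_of_mem hTU⟩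
  simp only [← Finset.map_sdiff, card_map, principalMinor_map] at hS hT ⊢
  refine (hL.submatrix f).principalMinor_le_of_local_max hζ hS (fun V hV hV2 => ?_) hT
  simpa only [principalMinor_map] using
    hloc (V.map f) (by simpa only [card_map] using hV)
      (by simpa only [← Finset.map_sdiff, card_map] using hV2)

lemma div_pow_le_pow_four_div_pow {d k : ℕ} (hdk : d ≤ k) (hk : 1 ≤ k) {ζ : ℝ} (hζ : 0 < ζ)
    (hζ1 : ζ ≤ 1) :
    ((4 * d - 3) / ζ) ^ d ≤ ((k : ℝ) ^ 4 / ζ) ^ k := by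
  have hk1 : (1 : ℝ) ≤ k := by exact_mod_cast hk
  have hbase : 1 ≤ (k : ℝ) ^ 4 / ζ := (one_le_div hζ).mpr (hζ1.trans (one_le_pow₀ hk1))
  obtain rfl | hd := Nat.eq_zero_or_pos d
  · simpa using one_le_pow₀ hbase
  have hd1 : (1 : ℝ) ≤ d := by exact_mod_cast hd
  calc ((4 * d - 3) / ζ) ^ d ≤ ((k : ℝ) ^ 4 / ζ) ^ d := by
        gcongr
        · exact div_nonneg (by linarith) hζ.le
        · calc (4 : ℝ) * d - 3 = 1 + (4 : ℕ) * (d - 1) := by push_cast; ring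
            _ ≤ (d : ℝ) ^ 4 := one_add_mul_sub_le_pow (by linarith) 4
            _ ≤ (k : ℝ) ^ 4 := by gcongr
    _ ≤ ((k : ℝ) ^ 4 / ζ) ^ k := pow_le_pow_right₀ hbase hdk

/-- For an nPSD matrix `L` (i.e. `L + Lᵀ ⪰ 0`), any `(2,ζ)`-approximate local maximum `S`
of the principal-minor density `μ(S) = det(L_S)` on `k`-element subsets, with
`det(L_S) > 0`, is a `(k^4/ζ)^k`-approximate global maximum. -/
theorem nPSD_local_search_guarantee
    (n k : ℕ) (hk : 1 ≤ k) (hkn : k ≤ n) (ζ : ℝ) (hζ : 0 < ζ) (hζ1 : ζ ≤ 1)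
    (L : Matrix (Fin n) (Fin n) ℝ) (hL : (L + Lᵀ).PosSemidef)
    (S : Finset (Fin n)) (hS : S.card = k) (hSpos : 0 < pminor L S)
    (hloc : ∀ T : Finset (Fin n), T.card = k → (S \ T).card ≤ 2 →
      ζ * pminor L T ≤ pminor L S) :
    ∀ T : Finset (Fin n), T.card = k →
      pminor L T ≤ ((k : ℝ) ^ 4 / ζ) ^ k * pminor L S := by
  subst hS
  exact fun T hT => (nPSD_local_search_guarantee_general hL hζ hSpos hloc hT).trans <|
    mul_le_mul_of_nonneg_right
      (div_pow_le_pow_four_div_pow (card_le_card sdiff_subset) hk hζ hζ1) hSpos.le
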